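/- There is a ℂ-algebra homomorphism μ_q: 𝒪q(GL₂) → 𝒟q(GL₂), the quantum moment map, determined by sending each generator ℓ^i_j to the (i,j)-entry of the matrix D·A⁻¹·D⁻¹·A in the 2×2 matrices over 𝒟q(GL₂), where A⁻¹ = det_q(A)⁻¹Ã and D⁻¹ = det_q(D)⁻¹D̃. -/

import Mathlib

noncomputable section

/-- Generators `a¹₁, a¹₂, a²₁, a²₂, ∂¹₁, ∂¹₂, ∂²₁, ∂²₂` of the algebra
`𝒟q⁺(GL₂)` of quantum differential operators. -/
inductive QLGen : Type
  | a11 | a12 | a21 | a22 | p11 | p12 | p21 | p22 | ai | di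

abbrev FQL : Type := FreeAlgebra ℂ QLGen

def gQL : QLGen → FQL := FreeAlgebra.ι ℂ

/-- The defining relations of `𝒟q⁺(GL₂)`. -/
inductive QLRel (q : ℂ) : FQL → FQL → Prop
  -- the six `a`-relations
  | a1 : QLRel q (gQL .a12 * gQL .a11)
      (gQL .a11 * gQL .a12 + (1 - q⁻¹ ^ 2) • (gQL .a12 * gQL .a22))
  | a2 : QLRel q (gQL .a22 * gQL .a11) (gQL .a11 * gQL .a22)
  | a3 : QLRel q (gQL .a21 * gQL .a11)
      (gQL .a11 * gQL .a21 - (1 - q⁻¹ ^ 2) • (gQL .a22 * gQL .a21))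
  | a4 : QLRel q (gQL .a22 * gQL .a12) ((q ^ 2) • (gQL .a12 * gQL .a22))
  | a5 : QLRel q (gQL .a21 * gQL .a12)
      (gQL .a12 * gQL .a21 + (1 - q⁻¹ ^ 2) • (gQL .a11 * gQL .a22 - gQL .a22 * gQL .a22))
  | a6 : QLRel q (gQL .a22 * gQL .a21) ((q⁻¹ ^ 2) • (gQL .a21 * gQL .a22))
  -- the six `∂`-relations
  | p1 : QLRel q (gQL .p12 * gQL .p11)
      (gQL .p11 * gQL .p12 + (1 - q⁻¹ ^ 2) • (gQL .p12 * gQL .p22))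
  | p2 : QLRel q (gQL .p22 * gQL .p11) (gQL .p11 * gQL .p22)
  | p3 : QLRel q (gQL .p21 * gQL .p11)
      (gQL .p11 * gQL .p21 - (1 - q⁻¹ ^ 2) • (gQL .p22 * gQL .p21))
  | p4 : QLRel q (gQL .p22 * gQL .p12) ((q ^ 2) • (gQL .p12 * gQL .p22))
  | p5 : QLRel q (gQL .p21 * gQL .p12)
      (gQL .p12 * gQL .p21 + (1 - q⁻¹ ^ 2) • (gQL .p11 * gQL .p22 - gQL .p22 * gQL .p22))
  | p6 : QLRel q (gQL .p22 * gQL .p21) ((q⁻¹ ^ 2) • (gQL .p21 * gQL .p22))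
  -- the sixteen cross relations
  | c1 : QLRel q (gQL .p11 * gQL .a11)
      (-((1 - q⁻¹ ^ 2) • (gQL .p12 * gQL .a21)) + (q⁻¹ ^ 2) • (gQL .a11 * gQL .p11)
        + (q⁻¹ ^ 2 - q⁻¹ ^ 4) • (gQL .a12 * gQL .p21))
  | c2 : QLRel q (gQL .p11 * gQL .a12)
      ((q⁻¹ ^ 2 - 1) • (gQL .p12 * gQL .a22) + (q⁻¹ ^ 2) • (gQL .a12 * gQL .p11))
  | c3 : QLRel q (gQL .p11 * gQL .a21)
      ((1 - q ^ 2) • (gQL .p21 * gQL .a11) - ((q - q⁻¹) ^ 2) • (gQL .p22 * gQL .a21)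
        + gQL .a21 * gQL .p11 + (1 - q⁻¹ ^ 2) • (gQL .a22 * gQL .p21))
  | c4 : QLRel q (gQL .p11 * gQL .a22)
      ((1 - q ^ 2) • (gQL .p21 * gQL .a12) - ((q - q⁻¹) ^ 2) • (gQL .p22 * gQL .a22)
        + gQL .a22 * gQL .p11)
  | c5 : QLRel q (gQL .p12 * gQL .a11)
      (gQL .a11 * gQL .p12 + (1 - q⁻¹ ^ 2) • (gQL .a12 * gQL .p22)
        + (q⁻¹ ^ 2 - 1) • (gQL .a12 * gQL .p11))
  | c6 : QLRel q (gQL .p12 * gQL .a12) ((q⁻¹ ^ 2) • (gQL .a12 * gQL .p12))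
  | c7 : QLRel q (gQL .p12 * gQL .a21)
      ((q⁻¹ ^ 2 - 1) • (gQL .p22 * gQL .a11) + gQL .a21 * gQL .p12
        + (q⁻¹ ^ 2 - 1) • (gQL .a22 * gQL .p11) + (1 - q⁻¹ ^ 2) • (gQL .a22 * gQL .p22))
  | c8 : QLRel q (gQL .p12 * gQL .a22)
      ((q⁻¹ ^ 2 - 1) • (gQL .p22 * gQL .a12) + (q⁻¹ ^ 2) • (gQL .a22 * gQL .p12))
  | c9 : QLRel q (gQL .p21 * gQL .a11)
      ((q⁻¹ ^ 2) • (gQL .a11 * gQL .p21) - (1 - q⁻¹ ^ 2) • (gQL .p22 * gQL .a21))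
  | c10 : QLRel q (gQL .p21 * gQL .a12)
      ((q⁻¹ ^ 2 - 1) • (gQL .p22 * gQL .a22) + gQL .a12 * gQL .p21)
  | c11 : QLRel q (gQL .p21 * gQL .a21) ((q⁻¹ ^ 2) • (gQL .a21 * gQL .p21))
  | c12 : QLRel q (gQL .p21 * gQL .a22) (gQL .a22 * gQL .p21)
  | c13 : QLRel q (gQL .p22 * gQL .a11)
      (gQL .a11 * gQL .p22 + (1 - q ^ 2) • (gQL .a12 * gQL .p21))
  | c14 : QLRel q (gQL .p22 * gQL .a12) (gQL .a12 * gQL .p22)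
  | c15 : QLRel q (gQL .p22 * gQL .a21)
      ((q⁻¹ ^ 2) • (gQL .a21 * gQL .p22) + (q⁻¹ ^ 2 - 1) • (gQL .a22 * gQL .p21))
  | c16 : QLRel q (gQL .p22 * gQL .a22) ((q⁻¹ ^ 2) • (gQL .a22 * gQL .p22))

  -- the localization relations: `ai` and `di` are two-sided inverses of
  -- `det_q(A)` and `det_q(D)` respectively
  | invA1 : QLRel q (gQL .ai * (gQL .a11 * gQL .a22 - (q ^ 2) • (gQL .a12 * gQL .a21))) 1
  | invA2 : QLRel q ((gQL .a11 * gQL .a22 - (q ^ 2) • (gQL .a12 * gQL .a21)) * gQL .ai) 1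
  | invD1 : QLRel q (gQL .di * (gQL .p11 * gQL .p22 - (q ^ 2) • (gQL .p12 * gQL .p21))) 1
  | invD2 : QLRel q ((gQL .p11 * gQL .p22 - (q ^ 2) • (gQL .p12 * gQL .p21)) * gQL .di) 1

/-- The algebra `𝒟q⁺(GL₂)` of quantum differential operators on `GL₂`. -/
abbrev DqLoc (q : ℂ) : Type := RingQuot (QLRel q)

def a11 (q : ℂ) : DqLoc q := RingQuot.mkAlgHom ℂ (QLRel q) (gQL .a11)
def a12 (q : ℂ) : DqLoc q := RingQuot.mkAlgHom ℂ (QLRel q) (gQL .a12)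
def a21 (q : ℂ) : DqLoc q := RingQuot.mkAlgHom ℂ (QLRel q) (gQL .a21)
def a22 (q : ℂ) : DqLoc q := RingQuot.mkAlgHom ℂ (QLRel q) (gQL .a22)
def p11 (q : ℂ) : DqLoc q := RingQuot.mkAlgHom ℂ (QLRel q) (gQL .p11)
def p12 (q : ℂ) : DqLoc q := RingQuot.mkAlgHom ℂ (QLRel q) (gQL .p12)
def p21 (q : ℂ) : DqLoc q := RingQuot.mkAlgHom ℂ (QLRel q) (gQL .p21)
def p22 (q : ℂ) : DqLoc q := RingQuot.mkAlgHom ℂ (QLRel q) (gQL .p22)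

/-- The quantum determinant `det_q(A) = a¹₁a²₂ − q²a¹₂a²₁`. -/
def detA (q : ℂ) : DqLoc q := a11 q * a22 q - (q ^ 2) • (a12 q * a21 q)

/-- The quantum determinant `det_q(D) = ∂¹₁∂²₂ − q²∂¹₂∂²₁`. -/
def detD (q : ℂ) : DqLoc q := p11 q * p22 q - (q ^ 2) • (p12 q * p21 q)

/-- The inverse `det_q(A)⁻¹`. -/
def ai (q : ℂ) : DqLoc q := RingQuot.mkAlgHom ℂ (QLRel q) (gQL .ai)

/-- The inverse `det_q(D)⁻¹`. -/
def di (q : ℂ) : DqLoc q := RingQuot.mkAlgHom ℂ (QLRel q) (gQL .di)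

/-- The matrix `A = (a^i_j)`. -/
def Amat (q : ℂ) : Matrix (Fin 2) (Fin 2) (DqLoc q) :=
  !![a11 q, a12 q; a21 q, a22 q]

/-- The matrix `D = (∂^i_j)`. -/
def Dmat (q : ℂ) : Matrix (Fin 2) (Fin 2) (DqLoc q) :=
  !![p11 q, p12 q; p21 q, p22 q]

/-- The quantum adjugate matrix `Ã = [[a²₂, −q²a¹₂], [−q²a²₁, q²a¹₁ + (1−q²)a²₂]]`. -/
def Atil (q : ℂ) : Matrix (Fin 2) (Fin 2) (DqLoc q) :=
  !![a22 q, -((q ^ 2) • a12 q); -((q ^ 2) • a21 q), (q ^ 2) • a11 q + (1 - q ^ 2) • a22 q]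

/-- The quantum adjugate matrix `D̃ = [[∂²₂, −q²∂¹₂], [−q²∂²₁, q²∂¹₁ + (1−q²)∂²₂]]`. -/
def Dtil (q : ℂ) : Matrix (Fin 2) (Fin 2) (DqLoc q) :=
  !![p22 q, -((q ^ 2) • p12 q); -((q ^ 2) • p21 q), (q ^ 2) • p11 q + (1 - q ^ 2) • p22 q]

/-- The inverse matrix `A⁻¹ = det_q(A)⁻¹·Ã`. -/
def Ainv (q : ℂ) : Matrix (Fin 2) (Fin 2) (DqLoc q) := fun i j => ai q * Atil q i j

/-- The inverse matrix `D⁻¹ = det_q(D)⁻¹·D̃`. -/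
def Dinv (q : ℂ) : Matrix (Fin 2) (Fin 2) (DqLoc q) := fun i j => di q * Dtil q i j

/-- Generators `ℓ¹₁, ℓ¹₂, ℓ²₁, ℓ²₂` of `𝒪q⁺(GL₂)`, together with the inverse `li`
of the (central) quantum determinant. -/
inductive OGen : Type
  | l11 | l12 | l21 | l22 | li

abbrev FO : Type := FreeAlgebra ℂ OGen

def gO : OGen → FO := FreeAlgebra.ι ℂ

/-- The defining relations of `𝒪q(GL₂)`, the localization of `𝒪q⁺(GL₂)` at the
central quantum determinant `det_q(L) = ℓ¹₁ℓ²₂ − q²ℓ¹₂ℓ²₁`. -/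
inductive ORel (q : ℂ) : FO → FO → Prop
  | r1 : ORel q (gO .l12 * gO .l11)
      (gO .l11 * gO .l12 + (1 - q⁻¹ ^ 2) • (gO .l12 * gO .l22))
  | r2 : ORel q (gO .l22 * gO .l11) (gO .l11 * gO .l22)
  | r3 : ORel q (gO .l21 * gO .l11)
      (gO .l11 * gO .l21 - (1 - q⁻¹ ^ 2) • (gO .l22 * gO .l21))
  | r4 : ORel q (gO .l22 * gO .l12) ((q ^ 2) • (gO .l12 * gO .l22))
  | r5 : ORel q (gO .l21 * gO .l12)
      (gO .l12 * gO .l21 + (1 - q⁻¹ ^ 2) • (gO .l11 * gO .l22 - gO .l22 * gO .l22))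
  | r6 : ORel q (gO .l22 * gO .l21) ((q⁻¹ ^ 2) • (gO .l21 * gO .l22))
  | inv1 : ORel q (gO .li * (gO .l11 * gO .l22 - (q ^ 2) • (gO .l12 * gO .l21))) 1
  | inv2 : ORel q ((gO .l11 * gO .l22 - (q ^ 2) • (gO .l12 * gO .l21)) * gO .li) 1

/-- The quantum coordinate algebra `𝒪q(GL₂)`. -/
abbrev OqGL2 (q : ℂ) : Type := RingQuot (ORel q)

/-- The matrix `L = (ℓ^i_j)` of generators of `𝒪q(GL₂)`. -/
def Lmat (q : ℂ) : Matrix (Fin 2) (Fin 2) (OqGL2 q) :=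
  !![RingQuot.mkAlgHom ℂ (ORel q) (gO .l11), RingQuot.mkAlgHom ℂ (ORel q) (gO .l12);
     RingQuot.mkAlgHom ℂ (ORel q) (gO .l21), RingQuot.mkAlgHom ℂ (ORel q) (gO .l22)]

lemma ebg {G : Type*} [Group G] (T A D : G) (hA : T*A*T*A = A*T*A*T) (hD : T*D*T*D = D*T*D*T)
    (hC : T*D*T*A = A*T*D*T⁻¹) :
    T*(D*A⁻¹*D⁻¹*A)*T*(D*A⁻¹*D⁻¹*A) = (D*A⁻¹*D⁻¹*A)*T*(D*A⁻¹*D⁻¹*A)*T := by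
  obtain ⟨S, hS⟩ : ∃ S, S = T*T := ⟨_, rfl⟩
  obtain ⟨B, hB⟩ : ∃ B, B = T*A*T := ⟨_, rfl⟩
  obtain ⟨E, hE⟩ : ∃ E, E = T*D*T := ⟨_, rfl⟩
  have f1 : A * E = E * A * S := by
    rw [hE, hS]
    calc A*(T*D*T) = (A*T*D*T⁻¹)*T*T := by group
      _ = (T*D*T*A)*T*T := by rw [hC]
      _ = _ := by group
  have g2 : B * D = S * D * B := by
    rw [hB, hS]
    calc T*A*T*D = T*(A*T*D*T⁻¹)*T := by group
      _ = T*(T*D*T*A)*T := by rw [hC]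
      _ = _ := by group
  have cA : A * B = B * A := by
    rw [hB]; calc A*(T*A*T) = A*T*A*T := by group
      _ = _ := by rw [hA]
  have cD : D * E = E * D := by
    rw [hE]; calc D*(T*D*T) = D*T*D*T := by group
      _ = _ := by rw [hD]
  have sA : S * (A * B) = A * B * S := by
    have h : T * (A * B) = A * B * T := by
      calc T * (A*B) = T*A*T*A*T := by rw [hB]; group
        _ = A*T*A*T*T := by rw [hA]
        _ = _ := by rw [hB]; group
    rw [hS, mul_assoc, h, ← mul_assoc, h, mul_assoc, mul_assoc]
  have sD : S * (D * E) = D * E * S := by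
    have h : T * (D * E) = D * E * T := by
      calc T * (D*E) = T*D*T*D*T := by rw [hE]; group
        _ = D*T*D*T*T := by rw [hD]
        _ = _ := by rw [hE]; group
    rw [hS, mul_assoc, h, ← mul_assoc, h, mul_assoc, mul_assoc]
  have f2 : D⁻¹ * E = E * D⁻¹ := by
    rw [inv_mul_eq_iff_eq_mul, ← mul_assoc, cD]; group
  have f3 : A⁻¹ * E = E * S⁻¹ * A⁻¹ := by
    rw [inv_mul_eq_iff_eq_mul, ← mul_assoc, ← mul_assoc, f1]; group
  have f5 : A * S * B⁻¹ = B⁻¹ * S * A := by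
    rw [mul_inv_eq_iff_eq_mul]
    calc A * S = B⁻¹ * (B * A * S) := by group
      _ = B⁻¹ * (A * B * S) := by rw [cA]
      _ = B⁻¹ * (S * (A * B)) := by rw [sA]
      _ = _ := by group
  have f5' : D * S * E⁻¹ = E⁻¹ * S * D := by
    rw [mul_inv_eq_iff_eq_mul]
    calc D * S = E⁻¹ * (E * D * S) := by group
      _ = E⁻¹ * (D * E * S) := by rw [cD]
      _ = E⁻¹ * (S * (D * E)) := by rw [sD]
      _ = _ := by group
  have f6 : D⁻¹ * B⁻¹ = B⁻¹ * D⁻¹ * S⁻¹ := by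
    rw [← mul_inv_rev, g2]; group
  have f7 : S⁻¹ * A⁻¹ * B⁻¹ = B⁻¹ * A⁻¹ * S⁻¹ := by
    have := congrArg (·⁻¹) sA
    simp only [mul_inv_rev] at this
    rw [this, mul_assoc, ← mul_inv_rev B A, ← mul_inv_rev A B, cA]
  have f7' : S⁻¹ * D⁻¹ * E⁻¹ = E⁻¹ * D⁻¹ * S⁻¹ := by
    have := congrArg (·⁻¹) sD
    simp only [mul_inv_rev] at this
    rw [this, mul_assoc, ← mul_inv_rev E D, ← mul_inv_rev D E, cD]
  have f8 : D * B⁻¹ = B⁻¹ * S * D := by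
    rw [mul_inv_eq_iff_eq_mul]
    calc D = B⁻¹ * (B * D) := by group
      _ = B⁻¹ * (S * D * B) := by rw [g2]
      _ = _ := by group
  have f9 : A * S * E⁻¹ = E⁻¹ * A := by
    rw [mul_inv_eq_iff_eq_mul]
    calc A * S = E⁻¹ * (E * A * S) := by group
      _ = E⁻¹ * (A * E) := by rw [f1]
      _ = _ := by group
  have f10 : E⁻¹ * A⁻¹ = S⁻¹ * A⁻¹ * E⁻¹ := by
    rw [← mul_inv_rev, f1]; group
  have f11 : B * A⁻¹ = A⁻¹ * B := by
    rw [mul_inv_eq_iff_eq_mul, mul_assoc, ← cA]; group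
  have f12 : B * D⁻¹ = D⁻¹ * S⁻¹ * B := by
    rw [mul_inv_eq_iff_eq_mul, mul_assoc, g2]; group
  have key : (D*A⁻¹*D⁻¹*A) * (E*B⁻¹*S*E⁻¹*B) = (E*B⁻¹*S*E⁻¹*B) * (D*A⁻¹*D⁻¹*A) := by
    calc (D*A⁻¹*D⁻¹*A) * (E*B⁻¹*S*E⁻¹*B)
        = D*A⁻¹*D⁻¹*(A*E)*B⁻¹*S*E⁻¹*B := by group
      _ = D*A⁻¹*(D⁻¹*E)*A*S*B⁻¹*S*E⁻¹*B := by rw [f1]; group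
      _ = D*(A⁻¹*E)*D⁻¹*A*S*B⁻¹*S*E⁻¹*B := by rw [f2]; group
      _ = (D*E)*S⁻¹*A⁻¹*D⁻¹*(A*S*B⁻¹)*S*E⁻¹*B := by rw [f3]; group
      _ = E*D*S⁻¹*A⁻¹*(D⁻¹*B⁻¹)*S*(A*S*E⁻¹)*B := by rw [cD, f5]; group
      _ = E*D*(S⁻¹*A⁻¹*B⁻¹)*D⁻¹*E⁻¹*A*B := by rw [f6, f9]; group
      _ = E*(D*B⁻¹)*A⁻¹*(S⁻¹*D⁻¹*E⁻¹)*A*B := by rw [f7]; group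
      _ = E*B⁻¹*S*D*A⁻¹*E⁻¹*D⁻¹*S⁻¹*A*B := by rw [f8, f7']; group
      _ = E*B⁻¹*S*D*S*(S⁻¹*A⁻¹*E⁻¹)*D⁻¹*S⁻¹*A*B := by group
      _ = E*B⁻¹*S*(D*S*E⁻¹)*A⁻¹*D⁻¹*S⁻¹*A*B := by rw [← f10]; group
      _ = E*B⁻¹*S*E⁻¹*S*D*A⁻¹*D⁻¹*S⁻¹*(A*B) := by rw [f5']; group
      _ = E*B⁻¹*S*E⁻¹*S*D*A⁻¹*(D⁻¹*S⁻¹*B)*A := by rw [cA]; group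
      _ = E*B⁻¹*S*E⁻¹*S*D*(A⁻¹*B)*D⁻¹*A := by rw [← f12]; group
      _ = E*B⁻¹*S*E⁻¹*(S*D*B)*A⁻¹*D⁻¹*A := by rw [← f11]; group
      _ = _ := by rw [← g2]; group
  have hL : T*(D*A⁻¹*D⁻¹*A)*T = E*B⁻¹*S*E⁻¹*B := by
    rw [hE, hB, hS]; group
  rw [hL, ← key, ← hL]; group

noncomputable section RE
variable {R : Type*} [Ring R] [Algebra ℂ R]

def emb4 (X : Matrix (Fin 2) (Fin 2) R) : Matrix (Fin 4) (Fin 4) R :=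
  !![X 0 0, 0, X 0 1, 0; 0, X 0 0, 0, X 0 1; X 1 0, 0, X 1 1, 0; 0, X 1 0, 0, X 1 1]

lemma emb4_mul (X Y : Matrix (Fin 2) (Fin 2) R) : emb4 (X * Y) = emb4 X * emb4 Y := by
  ext i j
  fin_cases i <;> fin_cases j <;>
    simp [emb4, Matrix.mul_apply, Fin.sum_univ_four, Fin.sum_univ_two]

lemma emb4_one : emb4 (1 : Matrix (Fin 2) (Fin 2) R) = 1 := by
  ext i j
  fin_cases i <;> fin_cases j <;> simp [emb4]

def T4 (R : Type*) [Ring R] [Algebra ℂ R] (q : ℂ) : Matrix (Fin 4) (Fin 4) R :=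
  !![q • 1, 0, 0, 0; 0, 0, 1, 0; 0, 1, (q - q⁻¹) • 1, 0; 0, 0, 0, q • 1]

def T4i (R : Type*) [Ring R] [Algebra ℂ R] (q : ℂ) : Matrix (Fin 4) (Fin 4) R :=
  !![q⁻¹ • 1, 0, 0, 0; 0, -(q - q⁻¹) • 1, 1, 0; 0, 1, 0, 0; 0, 0, 0, q⁻¹ • 1]

lemma T4_mul_inv (q : ℂ) (hq : q ≠ 0) : T4 R q * T4i R q = 1 := by
  ext i j
  fin_cases i <;> fin_cases j <;>
    simp [T4, T4i, Matrix.mul_apply, Fin.sum_univ_four, smul_smul, hq] <;> module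

lemma T4_inv_mul (q : ℂ) (hq : q ≠ 0) : T4i R q * T4 R q = 1 := by
  ext i j
  fin_cases i <;> fin_cases j <;>
    simp [T4, T4i, Matrix.mul_apply, Fin.sum_univ_four, smul_smul, hq] <;> module

structure RE (q : ℂ) (x y z w : R) : Prop where
  r1 : y * x = x * y + (1 - q⁻¹ ^ 2) • (y * w)
  r2 : w * x = x * w
  r3 : z * x = x * z - (1 - q⁻¹ ^ 2) • (w * z)
  r4 : w * y = q ^ 2 • (y * w)
  r5 : z * y = y * z + (1 - q⁻¹ ^ 2) • (x * w - w * w)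
  r6 : w * z = q⁻¹ ^ 2 • (z * w)

lemma RE.mat {q : ℂ} (hq : q ≠ 0) {X : Matrix (Fin 2) (Fin 2) R}
    (h : RE q (X 0 0) (X 0 1) (X 1 0) (X 1 1)) :
    T4 R q * emb4 X * T4 R q * emb4 X = emb4 X * T4 R q * emb4 X * T4 R q := by
  obtain ⟨h1, h2, h3, h4, h5, h6⟩ := h
  ext i j
  fin_cases i <;> fin_cases j <;>
    simp [T4, emb4, Matrix.mul_apply, Fin.sum_univ_four, add_mul, h1, h2, h3, h4, h5, h6] <;>
    match_scalars <;> (try field_simp) <;> (try ring)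

lemma RE.of_mat {q : ℂ} (hq : q ≠ 0) {X : Matrix (Fin 2) (Fin 2) R}
    (h : T4 R q * emb4 X * T4 R q * emb4 X = emb4 X * T4 R q * emb4 X * T4 R q) :
    RE q (X 0 0) (X 0 1) (X 1 0) (X 1 1) := by
  have e (i j) := congrFun (congrFun h i) j
  have e1 := e 0 2
  have e2 := e 1 1
  have e3 := e 2 0
  have e4 := e 1 3
  have e5 := e 1 2
  have e6 := e 3 1
  clear e h
  simp [T4, emb4, Matrix.mul_apply, Fin.sum_univ_four, add_mul] at e1 e2 e3 e4 e5 e6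
  constructor
  · linear_combination (norm := skip) -e1
    match_scalars <;> (try field_simp) <;> (try ring)
  · linear_combination (norm := skip) e2
    match_scalars <;> (try field_simp) <;> (try ring)
  · linear_combination (norm := skip) -e3
    match_scalars <;> (try field_simp) <;> (try ring)
  · linear_combination (norm := skip) e4
    match_scalars <;> (try field_simp) <;> (try ring)
  · linear_combination (norm := skip) q⁻¹ • e5
    match_scalars <;> (try field_simp) <;> (try ring)
  · linear_combination (norm := skip) (q⁻¹^2) • e6
    match_scalars <;> (try field_simp) <;> (try ring)

def del4 (q : ℂ) (V : Matrix (Fin 4) (Fin 4) R) : R := V 1 1 - q⁻¹ • V 1 2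

lemma del4_mul {q : ℂ} (hq : q ≠ 0) {V W : Matrix (Fin 4) (Fin 4) R}
    (hW : W * T4 R q = T4 R q * W) (h : V * W = 1) : del4 q V * del4 q W = 1 := by
  have e (i j) := congrFun (congrFun hW i) j
  have e0 := e 0 1
  have e1 := e 1 1
  have e3 := e 3 1
  have e2 := e 2 1
  have k1 := congrFun (congrFun h 1) 1
  have k2 := congrFun (congrFun h 1) 2
  clear e h hW
  simp [T4, Matrix.mul_apply, Fin.sum_univ_four] at e0 e1 e2 e3 k1 k2
  rw [e0, e1, e2, e3] at k2
  unfold del4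
  rw [e1]
  simp only [mul_add, mul_sub, sub_mul, smul_mul_assoc, mul_smul_comm] at k1 k2 ⊢
  linear_combination (norm := skip) k1 - q⁻¹ • k2
  match_scalars <;> (try field_simp) <;> (try ring)

lemma del4_det {q : ℂ} (hq : q ≠ 0) (X : Matrix (Fin 2) (Fin 2) R) :
    del4 q (emb4 X * T4 R q * emb4 X * T4 R q)
      = q⁻¹^2 • (X 0 0 * X 1 1 - q^2 • (X 0 1 * X 1 0)) := by
  simp [del4, T4, emb4, Matrix.mul_apply, Fin.sum_univ_four, add_mul]
  match_scalars <;> (try field_simp) <;> (try ring)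

lemma RE.cross {q : ℂ} (hq : q ≠ 0) {A D : Matrix (Fin 2) (Fin 2) R}
    (c1 : D 0 0 * A 0 0 = -((1 - q⁻¹ ^ 2) • (D 0 1 * A 1 0)) + (q⁻¹ ^ 2) • (A 0 0 * D 0 0)
        + (q⁻¹ ^ 2 - q⁻¹ ^ 4) • (A 0 1 * D 1 0))
    (c2 : D 0 0 * A 0 1 = (q⁻¹ ^ 2 - 1) • (D 0 1 * A 1 1) + (q⁻¹ ^ 2) • (A 0 1 * D 0 0))
    (c3 : D 0 0 * A 1 0 = (1 - q ^ 2) • (D 1 0 * A 0 0) - ((q - q⁻¹) ^ 2) • (D 1 1 * A 1 0)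
        + A 1 0 * D 0 0 + (1 - q⁻¹ ^ 2) • (A 1 1 * D 1 0))
    (c4 : D 0 0 * A 1 1 = (1 - q ^ 2) • (D 1 0 * A 0 1) - ((q - q⁻¹) ^ 2) • (D 1 1 * A 1 1)
        + A 1 1 * D 0 0)
    (c5 : D 0 1 * A 0 0 = A 0 0 * D 0 1 + (1 - q⁻¹ ^ 2) • (A 0 1 * D 1 1)
        + (q⁻¹ ^ 2 - 1) • (A 0 1 * D 0 0))
    (c6 : D 0 1 * A 0 1 = (q⁻¹ ^ 2) • (A 0 1 * D 0 1))
    (c7 : D 0 1 * A 1 0 = (q⁻¹ ^ 2 - 1) • (D 1 1 * A 0 0) + A 1 0 * D 0 1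
        + (q⁻¹ ^ 2 - 1) • (A 1 1 * D 0 0) + (1 - q⁻¹ ^ 2) • (A 1 1 * D 1 1))
    (c8 : D 0 1 * A 1 1 = (q⁻¹ ^ 2 - 1) • (D 1 1 * A 0 1) + (q⁻¹ ^ 2) • (A 1 1 * D 0 1))
    (c9 : D 1 0 * A 0 0 = (q⁻¹ ^ 2) • (A 0 0 * D 1 0) - (1 - q⁻¹ ^ 2) • (D 1 1 * A 1 0))
    (c10 : D 1 0 * A 0 1 = (q⁻¹ ^ 2 - 1) • (D 1 1 * A 1 1) + A 0 1 * D 1 0)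
    (c11 : D 1 0 * A 1 0 = (q⁻¹ ^ 2) • (A 1 0 * D 1 0))
    (c12 : D 1 0 * A 1 1 = A 1 1 * D 1 0)
    (c13 : D 1 1 * A 0 0 = A 0 0 * D 1 1 + (1 - q ^ 2) • (A 0 1 * D 1 0))
    (c14 : D 1 1 * A 0 1 = A 0 1 * D 1 1)
    (c15 : D 1 1 * A 1 0 = (q⁻¹ ^ 2) • (A 1 0 * D 1 1) + (q⁻¹ ^ 2 - 1) • (A 1 1 * D 1 0))
    (c16 : D 1 1 * A 1 1 = (q⁻¹ ^ 2) • (A 1 1 * D 1 1)) :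
    T4 R q * emb4 D * T4 R q * emb4 A = emb4 A * T4 R q * emb4 D * T4i R q := by
  ext i j
  fin_cases i <;> fin_cases j <;>
    simp [T4, T4i, emb4, Matrix.mul_apply, Fin.sum_univ_four, add_mul, c1, c2, c3, c4, c5, c6,
      c7, c8, c9, c10, c11, c12, c13, c14, c15, c16] <;>
    match_scalars <;> (try field_simp) <;> (try ring)

def til (q : ℂ) (X : Matrix (Fin 2) (Fin 2) R) : Matrix (Fin 2) (Fin 2) R :=
  !![X 1 1, -((q ^ 2) • X 0 1); -((q ^ 2) • X 1 0), (q ^ 2) • X 0 0 + (1 - q ^ 2) • X 1 1]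

/-- left and right inverse. -/
lemma RE.inv {q : ℂ} (hq : q ≠ 0) {X : Matrix (Fin 2) (Fin 2) R}
    (h : RE q (X 0 0) (X 0 1) (X 1 0) (X 1 1)) (d : R)
    (hd : d * (X 0 0 * X 1 1 - q^2 • (X 0 1 * X 1 0)) = 1)
    (hd' : (X 0 0 * X 1 1 - q^2 • (X 0 1 * X 1 0)) * d = 1) :
    X * (Matrix.of fun i j => d * til q X i j) = 1 ∧ (Matrix.of fun i j => d * til q X i j) * X = 1 := by
  obtain ⟨h1, h2, h3, h4, h5, h6⟩ := h
  have L : til q X * X = fun i j => if i = j then (X 0 0 * X 1 1 - q^2 • (X 0 1 * X 1 0)) else 0 := by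
    ext i j
    fin_cases i <;> fin_cases j <;>
    simp [til, Matrix.mul_apply, Fin.sum_univ_two, add_mul, h1, h2, h3, h4, h5, h6] <;>
    match_scalars <;> (try field_simp) <;> (try ring)
  have Rr : X * til q X = fun i j => if i = j then (X 0 0 * X 1 1 - q^2 • (X 0 1 * X 1 0)) else 0 := by
    ext i j
    fin_cases i <;> fin_cases j <;>
    simp [til, Matrix.mul_apply, Fin.sum_univ_two, mul_add, h1, h2, h3, h4, h5, h6] <;>
    match_scalars <;> (try field_simp) <;> (try ring)
  have l : (Matrix.of fun i j => d * til q X i j) * X = 1 := by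
    ext i j
    have := congrFun (congrFun L i) j
    simp only [Matrix.mul_apply, Fin.sum_univ_two, Matrix.of_apply] at this ⊢
    rw [mul_assoc, mul_assoc, ← mul_add, this, Matrix.one_apply]
    split_ifs <;> simp [hd]
  have r : X * (Matrix.of fun i j => til q X i j * d) = 1 := by
    ext i j
    have := congrFun (congrFun Rr i) j
    simp only [Matrix.mul_apply, Fin.sum_univ_two, Matrix.of_apply] at this ⊢
    rw [← mul_assoc, ← mul_assoc, ← add_mul, this, Matrix.one_apply]
    split_ifs <;> simp [hd']
  refine ⟨?_, l⟩
  rw [left_inv_eq_right_inv l r, r]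

end RE

lemma rel_eq (q : ℂ) {x y : FQL} (h : QLRel q x y) :
    RingQuot.mkAlgHom ℂ (QLRel q) x = RingQuot.mkAlgHom ℂ (QLRel q) y :=
  RingQuot.mkAlgHom_rel ℂ h

lemma Amat_RE (q : ℂ) : RE q (Amat q 0 0) (Amat q 0 1) (Amat q 1 0) (Amat q 1 1) where
  r1 := by simpa [Amat, Dmat, a11, a12, a21, a22, p11, p12, p21, p22, ai, di] using rel_eq q (.a1)
  r2 := by simpa [Amat, Dmat, a11, a12, a21, a22, p11, p12, p21, p22, ai, di] using rel_eq q (.a2)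
  r3 := by simpa [Amat, Dmat, a11, a12, a21, a22, p11, p12, p21, p22, ai, di] using rel_eq q (.a3)
  r4 := by simpa [Amat, Dmat, a11, a12, a21, a22, p11, p12, p21, p22, ai, di] using rel_eq q (.a4)
  r5 := by simpa [Amat, Dmat, a11, a12, a21, a22, p11, p12, p21, p22, ai, di] using rel_eq q (.a5)
  r6 := by simpa [Amat, Dmat, a11, a12, a21, a22, p11, p12, p21, p22, ai, di] using rel_eq q (.a6)

lemma Dmat_RE (q : ℂ) : RE q (Dmat q 0 0) (Dmat q 0 1) (Dmat q 1 0) (Dmat q 1 1) where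
  r1 := by simpa [Amat, Dmat, a11, a12, a21, a22, p11, p12, p21, p22, ai, di] using rel_eq q (.p1)
  r2 := by simpa [Amat, Dmat, a11, a12, a21, a22, p11, p12, p21, p22, ai, di] using rel_eq q (.p2)
  r3 := by simpa [Amat, Dmat, a11, a12, a21, a22, p11, p12, p21, p22, ai, di] using rel_eq q (.p3)
  r4 := by simpa [Amat, Dmat, a11, a12, a21, a22, p11, p12, p21, p22, ai, di] using rel_eq q (.p4)
  r5 := by simpa [Amat, Dmat, a11, a12, a21, a22, p11, p12, p21, p22, ai, di] using rel_eq q (.p5)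
  r6 := by simpa [Amat, Dmat, a11, a12, a21, a22, p11, p12, p21, p22, ai, di] using rel_eq q (.p6)

lemma cross_mat (q : ℂ) (hq : q ≠ 0) :
    T4 (DqLoc q) q * emb4 (Dmat q) * T4 _ q * emb4 (Amat q)
      = emb4 (Amat q) * T4 _ q * emb4 (Dmat q) * T4i _ q :=
  RE.cross hq
    (by simpa [Amat, Dmat, a11, a12, a21, a22, p11, p12, p21, p22, ai, di] using rel_eq q (.c1)) (by simpa [Amat, Dmat, a11, a12, a21, a22, p11, p12, p21, p22, ai, di] using rel_eq q (.c2))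
    (by simpa [Amat, Dmat, a11, a12, a21, a22, p11, p12, p21, p22, ai, di] using rel_eq q (.c3)) (by simpa [Amat, Dmat, a11, a12, a21, a22, p11, p12, p21, p22, ai, di] using rel_eq q (.c4))
    (by simpa [Amat, Dmat, a11, a12, a21, a22, p11, p12, p21, p22, ai, di] using rel_eq q (.c5)) (by simpa [Amat, Dmat, a11, a12, a21, a22, p11, p12, p21, p22, ai, di] using rel_eq q (.c6))
    (by simpa [Amat, Dmat, a11, a12, a21, a22, p11, p12, p21, p22, ai, di] using rel_eq q (.c7)) (by simpa [Amat, Dmat, a11, a12, a21, a22, p11, p12, p21, p22, ai, di] using rel_eq q (.c8))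
    (by simpa [Amat, Dmat, a11, a12, a21, a22, p11, p12, p21, p22, ai, di] using rel_eq q (.c9)) (by simpa [Amat, Dmat, a11, a12, a21, a22, p11, p12, p21, p22, ai, di] using rel_eq q (.c10))
    (by simpa [Amat, Dmat, a11, a12, a21, a22, p11, p12, p21, p22, ai, di] using rel_eq q (.c11)) (by simpa [Amat, Dmat, a11, a12, a21, a22, p11, p12, p21, p22, ai, di] using rel_eq q (.c12))
    (by simpa [Amat, Dmat, a11, a12, a21, a22, p11, p12, p21, p22, ai, di] using rel_eq q (.c13)) (by simpa [Amat, Dmat, a11, a12, a21, a22, p11, p12, p21, p22, ai, di] using rel_eq q (.c14))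
    (by simpa [Amat, Dmat, a11, a12, a21, a22, p11, p12, p21, p22, ai, di] using rel_eq q (.c15)) (by simpa [Amat, Dmat, a11, a12, a21, a22, p11, p12, p21, p22, ai, di] using rel_eq q (.c16))

lemma Amat_inv (q : ℂ) (hq : q ≠ 0) : Amat q * Ainv q = 1 ∧ Ainv q * Amat q = 1 :=
  (Amat_RE q).inv hq (ai q) (by simpa [Amat, Dmat, a11, a12, a21, a22, p11, p12, p21, p22, ai, di] using rel_eq q (.invA1)) (by simpa [Amat, Dmat, a11, a12, a21, a22, p11, p12, p21, p22, ai, di] using rel_eq q (.invA2))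

lemma Dmat_inv (q : ℂ) (hq : q ≠ 0) : Dmat q * Dinv q = 1 ∧ Dinv q * Dmat q = 1 :=
  (Dmat_RE q).inv hq (di q) (by simpa [Amat, Dmat, a11, a12, a21, a22, p11, p12, p21, p22, ai, di] using rel_eq q (.invD1)) (by simpa [Amat, Dmat, a11, a12, a21, a22, p11, p12, p21, p22, ai, di] using rel_eq q (.invD2))

lemma emb4_inv {R : Type*} [Ring R] [Algebra ℂ R] {X Y : Matrix (Fin 2) (Fin 2) R}
    (h : X * Y = 1) : emb4 X * emb4 Y = 1 := by
  rw [← emb4_mul, h, emb4_one]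

lemma main_re (q : ℂ) (hq : q ≠ 0) (M : Matrix (Fin 2) (Fin 2) (DqLoc q))
    (hM : M = Dmat q * Ainv q * Dinv q * Amat q) :
    RE q (M 0 0) (M 0 1) (M 1 0) (M 1 1) ∧
    ∃ d, d * (M 0 0 * M 1 1 - q^2 • (M 0 1 * M 1 0)) = 1 ∧
      (M 0 0 * M 1 1 - q^2 • (M 0 1 * M 1 0)) * d = 1 := by
  let T : (Matrix (Fin 4) (Fin 4) (DqLoc q))ˣ :=
    ⟨T4 _ q, T4i _ q, T4_mul_inv q hq, T4_inv_mul q hq⟩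
  let A : (Matrix (Fin 4) (Fin 4) (DqLoc q))ˣ :=
    ⟨emb4 (Amat q), emb4 (Ainv q), emb4_inv (Amat_inv q hq).1, emb4_inv (Amat_inv q hq).2⟩
  let D : (Matrix (Fin 4) (Fin 4) (DqLoc q))ˣ :=
    ⟨emb4 (Dmat q), emb4 (Dinv q), emb4_inv (Dmat_inv q hq).1, emb4_inv (Dmat_inv q hq).2⟩
  have hA : T * A * T * A = A * T * A * T := Units.ext ((Amat_RE q).mat hq)
  have hD : T * D * T * D = D * T * D * T := Units.ext ((Dmat_RE q).mat hq)
  have hC : T * D * T * A = A * T * D * T⁻¹ := Units.ext (cross_mat q hq)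
  have key := ebg T A D hA hD hC
  obtain ⟨L, hL⟩ : ∃ L, L = D * A⁻¹ * D⁻¹ * A := ⟨_, rfl⟩
  have hLM : (L : Matrix (Fin 4) (Fin 4) (DqLoc q)) = emb4 M := by
    rw [hL, hM, emb4_mul, emb4_mul, emb4_mul]; rfl
  rw [← hL] at key
  have hT : (T : Matrix (Fin 4) (Fin 4) (DqLoc q)) = T4 _ q := rfl
  have hre : T4 _ q * emb4 M * T4 _ q * emb4 M = emb4 M * T4 _ q * emb4 M * T4 _ q := by
    have := congrArg Units.val key
    simpa only [Units.val_mul, hLM, hT] using this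
  refine ⟨RE.of_mat hq hre, ?_⟩
  have hV : ((L * T * L * T : (Matrix (Fin 4) (Fin 4) (DqLoc q))ˣ) :
      Matrix (Fin 4) (Fin 4) (DqLoc q)) = emb4 M * T4 _ q * emb4 M * T4 _ q := by
    simp only [Units.val_mul, hLM, hT]
  have cV : Commute (L * T * L * T) T := by
    show L * T * L * T * T = T * (L * T * L * T)
    rw [← key]
    simp only [mul_assoc] at key ⊢
    rw [key]
  have cW : Commute (L * T * L * T)⁻¹ T := cV.inv_left
  have e1 := del4_mul hq (congrArg Units.val cW.eq) (Units.mul_inv (L * T * L * T))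
  have e2 := del4_mul hq (congrArg Units.val cV.eq) (Units.inv_mul (L * T * L * T))
  rw [hV, del4_det hq] at e1 e2
  refine ⟨q⁻¹ ^ 2 • del4 q ((L * T * L * T)⁻¹).val, ?_, ?_⟩
  · rw [smul_mul_assoc, ← mul_smul_comm]; exact e2
  · rw [mul_smul_comm, ← smul_mul_assoc]; exact e1

/-- There is a ℂ-algebra homomorphism `μ_q : 𝒪q(GL₂) → 𝒟q(GL₂)`, the
quantum moment map, determined by sending each generator `ℓ^i_j` to the
`(i,j)`-entry of the matrix `D·A⁻¹·D⁻¹·A` over `𝒟q(GL₂)`, where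
`A⁻¹ = det_q(A)⁻¹Ã` and `D⁻¹ = det_q(D)⁻¹D̃`. -/
theorem stmt15 (q : ℂ) (hq : q ≠ 0) :
    ∃! μ : OqGL2 q →ₐ[ℂ] DqLoc q,
      ∀ i j : Fin 2, μ (Lmat q i j) = (Dmat q * Ainv q * Dinv q * Amat q) i j := by
  obtain ⟨M, hM⟩ : ∃ M, M = Dmat q * Ainv q * Dinv q * Amat q := ⟨_, rfl⟩
  obtain ⟨⟨h1, h2, h3, h4, h5, h6⟩, d, hd, hd'⟩ := main_re q hq M hM
  rw [← hM]
  let f : OGen → DqLoc q := fun g => match g with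
    | .l11 => M 0 0 | .l12 => M 0 1 | .l21 => M 1 0 | .l22 => M 1 1 | .li => d
  have hf : ∀ ⦃x y : FO⦄, ORel q x y → FreeAlgebra.lift ℂ f x = FreeAlgebra.lift ℂ f y := by
    intro x y h
    cases h <;> simp only [gO, map_mul, map_add, map_sub, map_smul, map_one,
      FreeAlgebra.lift_ι_apply, f] <;> assumption
  refine ⟨RingQuot.liftAlgHom ℂ ⟨FreeAlgebra.lift ℂ f, hf⟩, ?_, ?_⟩
  · intro i j
    fin_cases i <;> fin_cases j <;> simp [Lmat, gO, f]
  · intro ν hν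
    apply RingQuot.ringQuot_ext'
    apply FreeAlgebra.hom_ext
    have n11 := hν 0 0
    have n12 := hν 0 1
    have n21 := hν 1 0
    have n22 := hν 1 1
    simp only [Lmat, gO, Matrix.of_apply, Matrix.cons_val', Matrix.cons_val_zero,
      Matrix.cons_val_one, Matrix.cons_val_fin_one] at n11 n12 n21 n22
    funext g
    cases g
    case li =>
      have := congrArg ν (RingQuot.mkAlgHom_rel ℂ (ORel.inv1 (q := q)))
      simp only [gO, map_mul, map_sub, map_smul, map_one, n11, n12, n21, n22] at this
      simpa [f] using left_inv_eq_right_inv this hd'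
    all_goals simp [f, n11, n12, n21, n22]
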